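/- arXiv:1804.09888 — 3 statements merged into one kernel-verified Lean document; each statement's English description precedes it below -/
import Mathlib

section
/- Let A, B, C be nonempty finite sets with |C| = |B|, let f : A × B → C, and let Good ⊆ A × B be such that for every a ∈ A and σ ∈ C there is at most one b ∈ B with (a, b) ∈ Good and f(a, b) = σ. If |Good| ≥ (1 − ε)·|A|·|B| for some ε ∈ [0, 1], then there exists σ ∈ C such that |{a ∈ A : ∃ b ∈ B, (a, b) ∈ Good ∧ f(a, b) = σ}| ≥ (1 − ε)·|A|. -/
open Finset in
theorem exists_le_card_image_fiber_of_mul_le_card_of_maps_to {α β γ M : Type*} [DecidableEq β]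
    [DecidableEq γ] [CommSemiring M] [LinearOrder M] [IsStrictOrderedRing M]
    {s : Finset α} {t : Finset γ} {f : α → γ} {g : α → β} {c : M}
    (hf : ∀ x ∈ s, f x ∈ t) (hg : ∀ y ∈ t, Set.InjOn g ({x ∈ s | f x = y} : Finset α))
    (ht : t.Nonempty) (hc : #t * c ≤ #s) :
    ∃ y ∈ t, c ≤ #({x ∈ s | f x = y}.image g) := by
  obtain ⟨y, hy, hcy⟩ := exists_le_card_fiber_of_nsmul_le_card_of_maps_to (b := c) hf ht
    (by rwa [nsmul_eq_mul])
  exact ⟨y, hy, by rwa [card_image_of_injOn (hg y hy)]⟩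

theorem stmt1_general {A B C M : Type*} [Fintype C] [Nonempty C]
    [CommSemiring M] [LinearOrder M] [IsStrictOrderedRing M]
    (f : A × B → C) (Good : Finset (A × B))
    (huniq : ∀ (a : A) (σ : C) (b b' : B), (a, b) ∈ Good → f (a, b) = σ →
      (a, b') ∈ Good → f (a, b') = σ → b = b')
    (c : M) (hGood : Fintype.card C * c ≤ Good.card) :
    ∃ σ : C, c ≤ ({a : A | ∃ b : B, (a, b) ∈ Good ∧ f (a, b) = σ}.ncard : M) := by
  classical
  have fst_injOn (σ : C) : Set.InjOn Prod.fst (Good.filter (f · = σ) : Set (A × B)) := by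
    rintro ⟨a, b⟩ h ⟨_, b'⟩ h' rfl
    obtain ⟨hb, hbσ⟩ := Finset.mem_filter.mp h
    obtain ⟨hb', hbσ'⟩ := Finset.mem_filter.mp h'
    rw [huniq a σ b b' hb hbσ hb' hbσ']
  obtain ⟨σ, -, hσ⟩ := exists_le_card_image_fiber_of_mul_le_card_of_maps_to
    (fun p _ => Finset.mem_univ (f p)) (fun σ _ => fst_injOn σ) Finset.univ_nonempty hGood
  have image_fst_fiber : {a : A | ∃ b : B, (a, b) ∈ Good ∧ f (a, b) = σ} =
      ((Good.filter (f · = σ)).image Prod.fst : Set A) := by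
    ext a
    simp
  exact ⟨σ, by rwa [image_fst_fiber, Set.ncard_coe_finset]⟩

/- Proposition 2 (abstract form): if at least a `(1 - ε)` fraction of the message
realisations decode correctly, and for each source realisation `a` and broadcast value
`σ` at most one edge realisation `b` is good with `f (a, b) = σ`, then some broadcast
value `σ` is good for at least a `(1 - ε)` fraction of the source realisations. -/
open Classical in
theorem stmt1 {A B C : Type*} [Fintype A] [Fintype B] [Fintype C]
    [Nonempty A] [Nonempty B] [Nonempty C]
    (hcard : Fintype.card C = Fintype.card B)
    (f : A × B → C) (Good : Finset (A × B))
    (huniq : ∀ (a : A) (σ : C) (b b' : B), (a, b) ∈ Good → f (a, b) = σ →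
      (a, b') ∈ Good → f (a, b') = σ → b = b')
    (ε : ℝ) (hε0 : 0 ≤ ε) (hε1 : ε ≤ 1)
    (hGood : (1 - ε) * (Fintype.card A : ℝ) * (Fintype.card B : ℝ) ≤ (Good.card : ℝ)) :
    ∃ σ : C, (1 - ε) * (Fintype.card A : ℝ) ≤
      ((Finset.univ.filter (fun a : A => ∃ b : B, (a, b) ∈ Good ∧ f (a, b) = σ)).card : ℝ) := by
  simpa [← Set.ncard_coe_finset] using stmt1_general f Good huniq ((1 - ε) * Fintype.card A)
    (by rwa [hcard, mul_comm])
end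

section
/- Let A be a nonempty finite set, let ε' ∈ [0, 1), and let G ⊆ A be nonempty with |G| = (1 − ε')·|A|. Let U be uniformly distributed on A and let Û be uniformly distributed on G. Then for every function g from A to a finite set Y, H(g(U)) − H(g(Û)) ≤ ε'·log|A| − log(1 − ε'), where H denotes Shannon entropy with logarithms to base 2. -/
/-- `nml2 x = -x * log₂ x`, the summand of base-2 Shannon entropy
(with the convention `0 · log 0 = 0`). -/
noncomputable def nml2 (x : ℝ) : ℝ := -x * Real.logb 2 x

open Classical in
/-- Base-2 Shannon entropy of the random variable `X` defined on the finite
probability space `Ω` with probability mass function `p`. -/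
noncomputable def entropy {Ω S : Type*} [Fintype Ω] [Fintype S]
    (p : Ω → ℝ) (X : Ω → S) : ℝ :=
  ∑ s : S, nml2 (∑ ω : Ω, if X ω = s then p ω else 0)

/-- Conditional Shannon entropy `H(X | Y)` (base 2). -/
noncomputable def condEntropy {Ω S T : Type*} [Fintype Ω] [Fintype S] [Fintype T]
    (p : Ω → ℝ) (X : Ω → S) (Y : Ω → T) : ℝ :=
  entropy p (fun ω => (X ω, Y ω)) - entropy p Y

/-- Mutual information `I(X; Y)` (base 2). -/
noncomputable def mutualInfo {Ω S T : Type*} [Fintype Ω] [Fintype S] [Fintype T]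
    (p : Ω → ℝ) (X : Ω → S) (Y : Ω → T) : ℝ :=
  entropy p X + entropy p Y - entropy p (fun ω => (X ω, Y ω))

/-- Conditional mutual information `I(X; Y | Z)` (base 2). -/
noncomputable def condMutualInfo {Ω S T W : Type*} [Fintype Ω] [Fintype S] [Fintype T]
    [Fintype W] (p : Ω → ℝ) (X : Ω → S) (Y : Ω → T) (Z : Ω → W) : ℝ :=
  entropy p (fun ω => (X ω, Z ω)) + entropy p (fun ω => (Y ω, Z ω))
    - entropy p (fun ω => ((X ω, Y ω), Z ω)) - entropy p Z

/- By the chain rule, `H(g(U)) = log |G| - H(U | g(U))` for `U` uniform on `G`. Given `g(U)`, such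
a `U` is uniform on a fibre, so `|G| · H(U | g(U))` is the sum over `a ∈ G` of the logarithm of the
size of the fibre through `a`, a quantity that grows with `G`. Hence, for `U` uniform on `A` and `Û`
uniform on `G`, `H(U | g(U)) ≥ (1 - ε') H(Û | g(Û))`, and `H(g(U)) - H(g(Û))` is at most
`-log (1 - ε') + ε' H(Û | g(Û))`. -/

section UniformEntropy

open Finset
open scoped BigOperators

variable {A Y : Type*}

open Classical in
/-- The probability mass function of the uniform distribution on a finite set `G` of outcomes,
extended by zero to the ambient type. For `G = ∅` it is identically zero. -/
noncomputable def uniformMass (G : Finset A) (a : A) : ℝ :=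
  if a ∈ G then 1 / (#G : ℝ) else 0

theorem uniformMass_univ [Fintype A] :
    uniformMass (univ : Finset A) = fun _ => 1 / (Fintype.card A : ℝ) := by
  ext a
  rw [uniformMass, if_pos (mem_univ a), card_univ]

theorem card_fiber_pos [DecidableEq Y] {G : Finset A} (g : A → Y) {a : A} (ha : a ∈ G) :
    0 < #{b ∈ G | g b = g a} :=
  card_pos.mpr ⟨a, mem_filter.mpr ⟨ha, rfl⟩⟩

variable [Fintype A]

open Classical in
theorem sum_uniformMass_fiber (G : Finset A) (g : A → Y) (y : Y) :
    (∑ a, if g a = y then uniformMass G a else 0) = (#{a ∈ G | g a = y} : ℝ) / #G := by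
  simp only [uniformMass, ← ite_and, ← sum_filter, sum_const, nsmul_eq_mul, mul_one_div]
  congr 3
  ext a
  simp [and_comm]

open Classical in
theorem entropy_uniformMass [Fintype Y] (G : Finset A) (g : A → Y) :
    entropy (uniformMass G) g =
      𝔼 a ∈ G, (Real.logb 2 #G - Real.logb 2 #{b ∈ G | g b = g a}) := by
  have fiber_term (y : Y) :
      nml2 ((#{a ∈ G | g a = y} : ℝ) / #G) =
        (∑ a ∈ G with g a = y, (Real.logb 2 #G - Real.logb 2 #{b ∈ G | g b = g a})) / #G := by
    have sum_eq : ∑ a ∈ G with g a = y, (Real.logb 2 #G - Real.logb 2 #{b ∈ G | g b = g a}) =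
        #{a ∈ G | g a = y} * (Real.logb 2 #G - Real.logb 2 #{a ∈ G | g a = y}) := by
      rw [← nsmul_eq_mul, ← sum_const]
      refine sum_congr rfl fun a ha => ?_
      rw [(mem_filter.mp ha).2]
    rw [sum_eq, nml2]
    rcases eq_or_ne (#{a ∈ G | g a = y} : ℝ) 0 with fiber_empty | fiber_ne
    · simp [fiber_empty]
    have card_ne : (#G : ℝ) ≠ 0 := fun h => fiber_ne <| by
      rw [Nat.cast_eq_zero, card_eq_zero] at h
      simp [h]
    rw [Real.logb_div fiber_ne card_ne]
    ring
  simp only [entropy, sum_uniformMass_fiber, fiber_term]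
  rw [← sum_div, sum_fiberwise G g, expect_eq_sum_div_card]

theorem entropy_uniformMass_of_injective [Fintype Y] (G : Finset A) {X : A → Y}
    (hX : X.Injective) : entropy (uniformMass G) X = Real.logb 2 #G := by
  classical
  have card_fiber_eq_one : ∀ a ∈ G, #{b ∈ G | X b = X a} = 1 := fun a ha => by
    rw [card_eq_one]
    refine ⟨a, ext fun b => ?_⟩
    simp only [mem_filter, hX.eq_iff, mem_singleton]
    exact and_iff_right_of_imp fun h => h ▸ ha
  rw [entropy_uniformMass]
  rcases G.eq_empty_or_nonempty with rfl | hG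
  · simp
  calc
    𝔼 a ∈ G, (Real.logb 2 #G - Real.logb 2 #{b ∈ G | X b = X a})
        = 𝔼 _a ∈ G, Real.logb 2 #G :=
      expect_congr rfl fun a ha => by
        rw [card_fiber_eq_one a ha, Nat.cast_one, Real.logb_one, sub_zero]
    _ = Real.logb 2 #G := expect_const hG _

variable [Fintype Y]

theorem entropy_uniformMass_eq_logb_card_sub_condEntropy (G : Finset A) (g : A → Y) :
    entropy (uniformMass G) g = Real.logb 2 #G - condEntropy (uniformMass G) id g := by
  have pair_injective : (fun a => (id a, g a)).Injective := fun _ _ h => congrArg Prod.fst h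
  rw [condEntropy, entropy_uniformMass_of_injective G pair_injective, sub_sub_cancel]

open Classical in
theorem condEntropy_uniformMass (G : Finset A) (g : A → Y) :
    condEntropy (uniformMass G) id g = 𝔼 a ∈ G, Real.logb 2 #{b ∈ G | g b = g a} := by
  have chain_rule := entropy_uniformMass_eq_logb_card_sub_condEntropy G g
  rw [entropy_uniformMass, expect_sub_distrib] at chain_rule
  rcases G.eq_empty_or_nonempty with rfl | hG
  · simpa using chain_rule
  rw [expect_const hG] at chain_rule
  exact (sub_right_injective chain_rule).symm

theorem condEntropy_uniformMass_le_logb_card {G : Finset A} (hG : G.Nonempty) (g : A → Y) :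
    condEntropy (uniformMass G) id g ≤ Real.logb 2 #G := by
  classical
  rw [condEntropy_uniformMass]
  exact expect_le hG fun a ha => Real.logb_le_logb_of_le one_lt_two
    (Nat.cast_pos.mpr (card_fiber_pos g ha)) (Nat.cast_le.mpr (card_filter_le _ _))

theorem card_mul_condEntropy_uniformMass_mono {G B : Finset A} (hGB : G ⊆ B) (g : A → Y) :
    #G * condEntropy (uniformMass G) id g ≤ #B * condEntropy (uniformMass B) id g := by
  classical
  simp only [condEntropy_uniformMass, card_mul_expect]
  calc
    ∑ a ∈ G, Real.logb 2 #{b ∈ G | g b = g a}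
        ≤ ∑ a ∈ G, Real.logb 2 #{b ∈ B | g b = g a} :=
      sum_le_sum fun a ha => Real.logb_le_logb_of_le one_lt_two
        (Nat.cast_pos.mpr (card_fiber_pos g ha))
        (Nat.cast_le.mpr (card_le_card (filter_subset_filter _ hGB)))
    _ ≤ ∑ a ∈ B, Real.logb 2 #{b ∈ B | g b = g a} :=
      sum_le_sum_of_subset_of_nonneg hGB fun a ha _ =>
        Real.logb_nonneg one_lt_two (Nat.one_le_cast.mpr (card_fiber_pos g ha))

end UniformEntropy

/- Proposition 3 (abstract form): with `U` uniform on `A` and `Û` uniform on a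
subset `G` of relative size `1 - ε'`, for every `g : A → Y` we have
`H(g(U)) - H(g(Û)) ≤ ε'·log₂|A| - log₂(1 - ε')`. -/
open Classical in
theorem stmt2 {A : Type*} [Fintype A] [Nonempty A]
    (ε' : ℝ) (hε0 : 0 ≤ ε') (hε1 : ε' < 1)
    (G : Finset A) (hGne : G.Nonempty)
    (hGcard : (G.card : ℝ) = (1 - ε') * (Fintype.card A : ℝ))
    {Y : Type*} [Fintype Y] (g : A → Y) :
    entropy (fun _ : A => (1 : ℝ) / (Fintype.card A : ℝ)) g
        - entropy (fun a : A => if a ∈ G then (1 : ℝ) / (G.card : ℝ) else 0) g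
      ≤ ε' * Real.logb 2 (Fintype.card A : ℝ) - Real.logb 2 (1 - ε') := by
  have card_A_pos : (0 : ℝ) < Fintype.card A := Nat.cast_pos.mpr Fintype.card_pos
  have logb_card : Real.logb 2 G.card = Real.logb 2 (1 - ε') + Real.logb 2 (Fintype.card A) := by
    rw [hGcard, Real.logb_mul (sub_pos.mpr hε1).ne' card_A_pos.ne']
  rw [← uniformMass_univ]
  change entropy (uniformMass Finset.univ) g - entropy (uniformMass G) g ≤ _
  rw [entropy_uniformMass_eq_logb_card_sub_condEntropy,
    entropy_uniformMass_eq_logb_card_sub_condEntropy, Finset.card_univ, logb_card]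
  set condU := condEntropy (uniformMass Finset.univ) id g
  set condG := condEntropy (uniformMass G) id g
  have scaled_condG_le_condU : (1 - ε') * condG ≤ condU := by
    have h := card_mul_condEntropy_uniformMass_mono G.subset_univ g
    rw [hGcard, Finset.card_univ, mul_right_comm, mul_comm] at h
    exact le_of_mul_le_mul_left h card_A_pos
  have condG_le_logb_card : condG ≤ Real.logb 2 (Fintype.card A) :=
    (condEntropy_uniformMass_le_logb_card hGne g).trans <|
      Real.logb_le_logb_of_le one_lt_two (Nat.cast_pos.mpr hGne.card_pos)
        (Nat.cast_le.mpr G.card_le_univ)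
  linarith [mul_le_mul_of_nonneg_left condG_le_logb_card hε0]
end

section
/- Let A be a nonempty finite set, let ε' ∈ [0, 1), and let G ⊆ A be nonempty with |G| = (1 − ε')·|A|. Let U be uniformly distributed on A and let Û be uniformly distributed on G. Then for every function g from A to a finite set Y and every function h from A to a finite set T, H(g(Û) | h(Û)) − H(g(U) | h(U)) ≤ (ε'/(1 − ε'))·(log e + log|Y|), where H(·|·) denotes conditional Shannon entropy with logarithms to base 2. -/
/-!
The law of `U` is the mixture of the law of `Û`, with weight `1 - ε'`, and of the uniform law on the
complement of `G`. Conditional entropy is concave in the law and nonnegative, so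
`(1 - ε') H(g(Û) | h(Û)) ≤ H(g(U) | h(U))`, and hence
`H(g(Û) | h(Û)) - H(g(U) | h(U)) ≤ (1 / (1 - ε') - 1) H(g(U) | h(U)) ≤ ε' / (1 - ε') log₂ |Y|`.
The first inequality says that conditional entropy, extended homogeneously to weights of arbitrary
total mass, is monotone in the weights; this follows from Gibbs' inequality on each fibre of `h`.
-/

open Finset Real

theorem mul_log_sub_mul_log_le {a b : ℝ} (ha : 0 ≤ a) (hb : 0 ≤ b) (hab : b = 0 → a = 0) :
    a * log b - a * log a ≤ b - a := by
  rcases ha.eq_or_lt with rfl | ha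
  · simpa using hb
  have hb : 0 < b := hb.lt_of_ne' fun h => ha.ne' (hab h)
  calc a * log b - a * log a = a * log (b / a) := by rw [log_div hb.ne' ha.ne', mul_sub]
    _ ≤ a * (b / a - 1) := by gcongr; exact log_le_sub_one_of_pos (div_pos hb ha)
    _ = b - a := by field_simp

theorem sum_mul_logb_le_sum_mul_logb {ι : Type*} (s : Finset ι) {a b : ι → ℝ} {β : ℝ} (hβ : 1 < β)
    (ha : ∀ i ∈ s, 0 ≤ a i) (hb : ∀ i ∈ s, 0 ≤ b i) (hab : ∀ i ∈ s, b i = 0 → a i = 0)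
    (hsum : ∑ i ∈ s, b i ≤ ∑ i ∈ s, a i) :
    ∑ i ∈ s, a i * logb β (b i) ≤ ∑ i ∈ s, a i * logb β (a i) := by
  have hlog : ∑ i ∈ s, a i * log (b i) - ∑ i ∈ s, a i * log (a i) ≤
      ∑ i ∈ s, b i - ∑ i ∈ s, a i := by
    rw [← sum_sub_distrib, ← sum_sub_distrib]
    exact sum_le_sum fun i hi => mul_log_sub_mul_log_le (ha i hi) (hb i hi) (hab i hi)
  simp only [logb, ← mul_div_assoc, ← sum_div]
  exact div_le_div_of_nonneg_right (by linarith) (log_pos hβ).le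

section WeightEntropy

variable {S : Type*} [Fintype S]

/-- The entropy of a family of nonnegative weights of arbitrary total mass: the extension of base-2
Shannon entropy from probability distributions to weights that is homogeneous of degree one. -/
noncomputable def weightEntropy (r : S → ℝ) : ℝ :=
  ∑ s, nml2 (r s) - nml2 (∑ s, r s)

theorem weightEntropy_eq_sum (r : S → ℝ) :
    weightEntropy r = ∑ s, r s * (logb 2 (∑ z, r z) - logb 2 (r s)) := by
  simp only [weightEntropy, nml2, neg_mul, mul_sub, sum_neg_distrib, sum_sub_distrib, ← sum_mul]
  ring

theorem weightEntropy_le_crossEntropy {q r : S → ℝ} (hq : ∀ s, 0 ≤ q s) (hr : ∀ s, 0 ≤ r s)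
    (hqr : ∀ s, r s = 0 → q s = 0) :
    weightEntropy q ≤ ∑ s, q s * (logb 2 (∑ z, r z) - logb 2 (r s)) := by
  set Q := ∑ s, q s with hQ
  set R := ∑ s, r s with hR
  by_cases hR0 : R = 0
  · have hr0 : ∀ s, r s = 0 := fun s =>
      (sum_eq_zero_iff_of_nonneg fun z _ => hr z).1 hR0 s (mem_univ s)
    simp [weightEntropy, nml2, fun s => hqr s (hr0 s)]
  by_cases hQ0 : Q = 0
  · have hq0 : ∀ s, q s = 0 := fun s =>
      (sum_eq_zero_iff_of_nonneg fun z _ => hq z).1 hQ0 s (mem_univ s)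
    simp [weightEntropy, nml2, hq0]
  -- Gibbs' inequality for `q` and the multiple of `r` with the same total mass.
  have hgibbs : ∑ s, q s * logb 2 (Q / R * r s) ≤ ∑ s, q s * logb 2 (q s) :=
    sum_mul_logb_le_sum_mul_logb univ one_lt_two (fun s _ => hq s)
      (fun s _ => mul_nonneg
        (div_nonneg (sum_nonneg fun z _ => hq z) (sum_nonneg fun z _ => hr z)) (hr s))
      (fun s _ h => hqr s ((mul_eq_zero_iff_left (div_ne_zero hQ0 hR0)).1 h))
      (by rw [← mul_sum, ← hR, ← hQ, div_mul_cancel₀ Q hR0])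
  have hexpand : ∀ s, q s * logb 2 (Q / R * r s) =
      q s * logb 2 Q - q s * (logb 2 R - logb 2 (r s)) := by
    intro s
    by_cases hs : r s = 0
    · simp [hqr s hs]
    · rw [logb_mul (div_ne_zero hQ0 hR0) hs, logb_div hQ0 hR0]
      ring
  rw [weightEntropy_eq_sum, ← hQ]
  simp only [hexpand, sum_sub_distrib] at hgibbs
  simp only [mul_sub, sum_sub_distrib] at hgibbs ⊢
  linarith

theorem weightEntropy_le_mul_of_le_mul {q r : S → ℝ} {c : ℝ} (hq : ∀ s, 0 ≤ q s)
    (hr : ∀ s, 0 ≤ r s) (hqr : ∀ s, q s ≤ c * r s) :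
    weightEntropy q ≤ c * weightEntropy r := by
  have hac : ∀ s, r s = 0 → q s = 0 := fun s hs =>
    le_antisymm (by simpa [hs] using hqr s) (hq s)
  refine (weightEntropy_le_crossEntropy hq hr hac).trans ?_
  rw [weightEntropy_eq_sum, mul_sum]
  refine sum_le_sum fun s _ => ?_
  rw [← mul_assoc]
  rcases (hr s).eq_or_lt with hs | hs
  · simp [hac s hs.symm, ← hs]
  · have hlog : logb 2 (r s) ≤ logb 2 (∑ z, r z) :=
      logb_le_logb_of_le one_lt_two hs (single_le_sum (fun z _ => hr z) (mem_univ s))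
    exact mul_le_mul_of_nonneg_right (hqr s) (sub_nonneg.2 hlog)

theorem weightEntropy_le_sum_mul_logb_card {q : S → ℝ} (hq : ∀ s, 0 ≤ q s) :
    weightEntropy q ≤ (∑ s, q s) * logb 2 (Fintype.card S) := by
  have h := weightEntropy_le_crossEntropy (r := fun _ => 1) hq (fun _ => zero_le_one)
    (fun _ h => absurd h one_ne_zero)
  simpa [sum_mul] using h

end WeightEntropy

section Law

variable {Ω S T : Type*} [Fintype Ω]

open Classical in
/-- The law of `X`, that is, the push-forward along `X` of the weights `p` on `Ω`. It is defined for
weights of any total mass, and spelled so that `entropy p X` unfolds to `∑ s, nml2 (law p X s)`. -/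
noncomputable def law (p : Ω → ℝ) (X : Ω → S) (s : S) : ℝ :=
  ∑ ω, if X ω = s then p ω else 0

theorem law_nonneg {p : Ω → ℝ} (hp : ∀ ω, 0 ≤ p ω) (X : Ω → S) (s : S) : 0 ≤ law p X s :=
  sum_nonneg fun ω _ => by split_ifs; exacts [hp ω, le_rfl]

theorem law_le_mul_law {p q : Ω → ℝ} {c : ℝ} (hqp : ∀ ω, q ω ≤ c * p ω) (X : Ω → S) (s : S) :
    law q X s ≤ c * law p X s := by
  simp only [law, mul_sum, mul_ite, mul_zero]
  refine sum_le_sum fun ω _ => ?_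
  split_ifs
  exacts [hqp ω, le_rfl]

theorem sum_law [Fintype S] (p : Ω → ℝ) (X : Ω → S) : ∑ s, law p X s = ∑ ω, p ω := by
  classical
  simp only [law]
  rw [sum_comm]
  simp

theorem sum_law_prodMk [Fintype S] (p : Ω → ℝ) (X : Ω → S) (Y : Ω → T) (t : T) :
    ∑ s, law p (fun ω => (X ω, Y ω)) (s, t) = law p Y t := by
  classical
  simp only [law]
  rw [sum_comm]
  refine sum_congr rfl fun ω _ => ?_
  by_cases hY : Y ω = t <;> simp [hY]

end Law

section CondEntropy

variable {Ω S T : Type*} [Fintype Ω] [Fintype S] [Fintype T]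

theorem condEntropy_eq_sum_weightEntropy (p : Ω → ℝ) (X : Ω → S) (Y : Ω → T) :
    condEntropy p X Y = ∑ t, weightEntropy fun s => law p (fun ω => (X ω, Y ω)) (s, t) := by
  simp only [weightEntropy, sum_law_prodMk, sum_sub_distrib]
  rw [← Fintype.sum_prod_type_right fun st => nml2 (law p (fun ω => (X ω, Y ω)) st)]
  rfl

theorem condEntropy_le_mul_of_le_mul {p q : Ω → ℝ} {c : ℝ} (hp : ∀ ω, 0 ≤ p ω)
    (hq : ∀ ω, 0 ≤ q ω) (hqp : ∀ ω, q ω ≤ c * p ω) (X : Ω → S) (Y : Ω → T) :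
    condEntropy q X Y ≤ c * condEntropy p X Y := by
  simp only [condEntropy_eq_sum_weightEntropy, mul_sum]
  exact sum_le_sum fun t _ => weightEntropy_le_mul_of_le_mul (fun s => law_nonneg hq _ (s, t))
    (fun s => law_nonneg hp _ (s, t)) (fun s => law_le_mul_law hqp _ (s, t))

theorem condEntropy_le_sum_mul_logb_card {p : Ω → ℝ} (hp : ∀ ω, 0 ≤ p ω) (X : Ω → S) (Y : Ω → T) :
    condEntropy p X Y ≤ (∑ ω, p ω) * logb 2 (Fintype.card S) := by
  calc condEntropy p X Y
      = ∑ t, weightEntropy fun s => law p (fun ω => (X ω, Y ω)) (s, t) :=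
        condEntropy_eq_sum_weightEntropy p X Y
    _ ≤ ∑ t, (∑ s, law p (fun ω => (X ω, Y ω)) (s, t)) * logb 2 (Fintype.card S) :=
        sum_le_sum fun t _ => weightEntropy_le_sum_mul_logb_card fun s => law_nonneg hp _ (s, t)
    _ = (∑ ω, p ω) * logb 2 (Fintype.card S) := by
        simp only [sum_law_prodMk, ← sum_mul, sum_law]

theorem stmt3_general {p q : Ω → ℝ} {ε : ℝ} (hε0 : 0 ≤ ε) (hε1 : ε < 1) (hp : ∀ ω, 0 ≤ p ω)
    (hp1 : ∑ ω, p ω = 1) (hq : ∀ ω, 0 ≤ q ω) (hqp : ∀ ω, (1 - ε) * q ω ≤ p ω)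
    (X : Ω → S) (Y : Ω → T) :
    condEntropy q X Y - condEntropy p X Y ≤ ε / (1 - ε) * logb 2 (Fintype.card S) := by
  have hδ : 0 < 1 - ε := sub_pos.2 hε1
  have hmono : condEntropy q X Y ≤ (1 - ε)⁻¹ * condEntropy p X Y :=
    condEntropy_le_mul_of_le_mul hp hq (fun ω => (le_inv_mul_iff₀ hδ).2 (hqp ω)) X Y
  have hcard : condEntropy p X Y ≤ logb 2 (Fintype.card S) := by
    simpa [hp1] using condEntropy_le_sum_mul_logb_card hp X Y
  calc condEntropy q X Y - condEntropy p X Y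
      ≤ (1 - ε)⁻¹ * condEntropy p X Y - condEntropy p X Y := by gcongr
    _ = ε / (1 - ε) * condEntropy p X Y := by field_simp; ring
    _ ≤ ε / (1 - ε) * logb 2 (Fintype.card S) := by gcongr

end CondEntropy

/- Proposition 4 (abstract form): with `U` uniform on `A` and `Û` uniform on a
subset `G` of relative size `1 - ε'`, for all `g : A → Y` and `h : A → T` we have
`H(g(Û) | h(Û)) - H(g(U) | h(U)) ≤ (ε'/(1-ε'))·(log₂ e + log₂|Y|)`. -/
open Classical in
theorem stmt3 {A : Type*} [Fintype A] [Nonempty A]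
    (ε' : ℝ) (hε0 : 0 ≤ ε') (hε1 : ε' < 1)
    (G : Finset A) (hGne : G.Nonempty)
    (hGcard : (G.card : ℝ) = (1 - ε') * (Fintype.card A : ℝ))
    {Y T : Type*} [Fintype Y] [Fintype T] (g : A → Y) (h : A → T) :
    condEntropy (fun a : A => if a ∈ G then (1 : ℝ) / (G.card : ℝ) else 0) g h
        - condEntropy (fun _ : A => (1 : ℝ) / (Fintype.card A : ℝ)) g h
      ≤ (ε' / (1 - ε')) *
          (Real.logb 2 (Real.exp 1) + Real.logb 2 (Fintype.card Y : ℝ)) := by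
  have hδ : 0 < 1 - ε' := sub_pos.2 hε1
  have hsum : ∑ _a : A, (1 : ℝ) / (Fintype.card A : ℝ) = 1 := by simp
  have hmix (a : A) : (1 - ε') * (if a ∈ G then (1 : ℝ) / (G.card : ℝ) else 0) ≤
      1 / (Fintype.card A : ℝ) := by
    rw [hGcard, mul_ite, mul_zero, mul_one_div, div_mul_cancel_left₀ hδ.ne', one_div]
    split_ifs <;> simp
  have hexp : 0 ≤ logb 2 (exp 1) := logb_nonneg one_lt_two (one_le_exp zero_le_one)
  refine (stmt3_general hε0 hε1 (fun _ => by positivity) hsum (fun a => by positivity)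
    hmix g h).trans ?_
  gcongr
  exact le_add_of_nonneg_left hexp
end
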